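/- Let T be a finite tree on vertex set V rooted at a vertex r with weight function w and state matrix 𝓛(w). Let q' be a vertex with q' ≠ r, set k = d(q',r), and let q be the parent of q' (the unique neighbor of q' with d(q,r) = k − 1). Then [𝓛(w)^{k+1}]_{q',r} = w(q',q) · [𝓛(w)^k]_{q,r} − ( Σ_{ℓ ∈ N(q')} w(q',ℓ) ) · [𝓛(w)^k]_{q',r}; that is, in the recursion for [𝓛(w)^{k+1}]_{q',r} the contributions of all children of q' vanish. -/

import Mathlib

open Finset

/-- A weight function for the simple graph `G`: symmetric, positive exactly on
adjacent pairs, zero otherwise (and zero on the diagonal). -/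
def IsWeightFn {V : Type*} (G : SimpleGraph V) (w : V → V → ℝ) : Prop :=
  (∀ u v, w u v = w v u) ∧
  (∀ u v, G.Adj u v → 0 < w u v) ∧
  (∀ u v, u ≠ v → ¬ G.Adj u v → w u v = 0) ∧
  (∀ v, w v v = 0)

/-- The state matrix `𝓛(w)` (the negative of the weighted Laplacian):
`[𝓛(w)]_{u,v} = w(u,v)` for `u ≠ v`, and `[𝓛(w)]_{v,v} = -∑_{u ≠ v} w(v,u)`. -/
def stateMatrix {V : Type*} [Fintype V] [DecidableEq V] (w : V → V → ℝ) :
    Matrix V V ℝ :=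
  Matrix.of fun u v => if u = v then -(∑ x ∈ Finset.univ.erase v, w v x) else w u v

/-!
An entry `(M ^ n) v r` of a power of a matrix supported on the diagonal and the edges of a graph is
a sum over lazy walks of length `n` from `v` to `r`, so it vanishes if `n < d(v, r)`. Expand
`M ^ (k + 1) = M * M ^ k` along row `a`, where `k = d(a, r)`. In an acyclic graph two neighbors of
`a` closer to `r` would start two distinct geodesics from `a` to `r`, so all neighbors of `a` but
its parent lie at distance `k + 1` from `r` and contribute nothing.
-/

section Distance

variable {V : Type*} {G : SimpleGraph V} {r a b c : V}

lemma exists_isPath_snd_eq_of_dist_add_one_eq (hab : G.Adj a b)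
    (hb : G.dist b r + 1 = G.dist a r) : ∃ p : G.Walk a r, p.IsPath ∧ p.snd = b := by
  have hr : G.Reachable a r := .of_dist_ne_zero (by omega)
  obtain ⟨p, hp⟩ := (hab.symm.reachable.trans hr).exists_walk_length_eq_dist
  have hgeod : (SimpleGraph.Walk.cons hab p).length = G.dist a r := by simp [hp, hb]
  exact ⟨_, SimpleGraph.Walk.isPath_of_length_eq_dist _ hgeod, p.snd_cons hab⟩

lemma eq_of_adj_of_dist_add_one_eq (hG : G.IsAcyclic) (hab : G.Adj a b) (hac : G.Adj a c)
    (hb : G.dist b r + 1 = G.dist a r) (hc : G.dist c r + 1 = G.dist a r) : b = c := by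
  obtain ⟨p, hp, rfl⟩ := exists_isPath_snd_eq_of_dist_add_one_eq hab hb
  obtain ⟨p', hp', rfl⟩ := exists_isPath_snd_eq_of_dist_add_one_eq hac hc
  have hpp' : (⟨p, hp⟩ : G.Path a r) = ⟨p', hp'⟩ := (hG.subsingleton_path a r).elim _ _
  exact congrArg (fun s : G.Path a r ↦ s.1.snd) hpp'

lemma dist_lt_dist_of_adj_of_ne_parent (hG : G.IsAcyclic) (hab : G.Adj a b)
    (hb : G.dist b r + 1 = G.dist a r) (hac : G.Adj a c) (hcb : c ≠ b) :
    G.dist a r < G.dist c r := by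
  have hr : G.Reachable r a := (SimpleGraph.Reachable.of_dist_ne_zero (by omega)).symm
  have hstep : G.dist a r = G.dist c r + 1 ∨ G.dist c r = G.dist a r + 1 := by
    simpa only [SimpleGraph.dist_comm (u := r)] using
      hG.dist_eq_dist_add_one_of_adj_of_reachable r hac hr
  rcases hstep with hc | hc
  · exact absurd (eq_of_adj_of_dist_add_one_eq hG hac hab hc.symm hb) hcb
  · omega

end Distance

section GraphSupportedMatrix

variable {V R : Type*} [Fintype V] [DecidableEq V] [Semiring R] {G : SimpleGraph V}
  {M : Matrix V V R}

lemma pow_apply_eq_zero_of_lt_dist (hM : ∀ u v, u ≠ v → ¬ G.Adj u v → M u v = 0) {n : ℕ} {v r : V}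
    (hn : n < G.dist v r) : (M ^ n) v r = 0 := by
  induction n generalizing v with
  | zero =>
    have hne : v ≠ r := (SimpleGraph.dist_ne_zero_iff_ne_and_reachable.mp hn.ne').1
    simp [hne]
  | succ n ih =>
    rw [pow_succ', Matrix.mul_apply]
    refine Finset.sum_eq_zero fun x _ ↦ ?_
    obtain rfl | hvx := eq_or_ne v x
    · rw [ih (by omega), mul_zero]
    by_cases hadj : G.Adj v x
    · have htri : G.dist v r ≤ 1 + G.dist x r :=
        SimpleGraph.dist_eq_one_iff_adj.mpr hadj ▸ hadj.reachable.dist_triangle_left r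
      rw [ih (by omega), mul_zero]
    · rw [hM v x hvx hadj, zero_mul]

lemma pow_dist_add_one_apply_of_isAcyclic (hG : G.IsAcyclic)
    (hM : ∀ u v, u ≠ v → ¬ G.Adj u v → M u v = 0) {r a b : V} (hab : G.Adj a b)
    (hb : G.dist b r + 1 = G.dist a r) :
    (M ^ (G.dist a r + 1)) a r =
      M a b * (M ^ G.dist a r) b r + M a a * (M ^ G.dist a r) a r := by
  rw [pow_succ', Matrix.mul_apply]
  refine Finset.sum_eq_add b a hab.ne' ?_ (by simp) (by simp)
  rintro x - ⟨hxb, hxa⟩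
  by_cases hax : G.Adj a x
  · have hdist : G.dist a r < G.dist x r := dist_lt_dist_of_adj_of_ne_parent hG hab hb hax hxb
    rw [pow_apply_eq_zero_of_lt_dist hM hdist, mul_zero]
  · rw [hM a x hxa.symm hax, zero_mul]

end GraphSupportedMatrix

section StateMatrix

variable {V : Type*} [Fintype V] [DecidableEq V] {w : V → V → ℝ}

lemma stateMatrix_apply_of_ne {u v : V} (huv : u ≠ v) : stateMatrix w u v = w u v := by
  simp [stateMatrix, huv]

lemma stateMatrix_apply_self {G : SimpleGraph V} {v : V} [Fintype (G.neighborSet v)]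
    (hw : ∀ u, v ≠ u → ¬ G.Adj v u → w v u = 0) :
    stateMatrix w v v = -∑ u ∈ G.neighborFinset v, w v u := by
  have hsub : G.neighborFinset v ⊆ Finset.univ.erase v := fun u hu ↦
    Finset.mem_erase.mpr ⟨((G.mem_neighborFinset v u).mp hu).ne', Finset.mem_univ u⟩
  simp only [stateMatrix, Matrix.of_apply, if_true]
  rw [Finset.sum_subset hsub]
  intro u hu hadj
  exact hw u (Finset.ne_of_mem_erase hu).symm (mt (G.mem_neighborFinset v u).mpr hadj)

end StateMatrix

theorem markov_entry_recursion_children_vanish_general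
    {V : Type*} [Fintype V] [DecidableEq V] {G : SimpleGraph V} (hG : G.IsAcyclic)
    {w : V → V → ℝ} (hw : ∀ u v, u ≠ v → ¬ G.Adj u v → w u v = 0)
    {r q' q : V} [Fintype (G.neighborSet q')] (hadj : G.Adj q' q)
    (hq : G.dist q r + 1 = G.dist q' r) :
    (stateMatrix w ^ (G.dist q' r + 1)) q' r =
      w q' q * (stateMatrix w ^ G.dist q' r) q r -
        (∑ ℓ ∈ G.neighborFinset q', w q' ℓ) * (stateMatrix w ^ G.dist q' r) q' r := by
  have hsupp : ∀ u v, u ≠ v → ¬ G.Adj u v → stateMatrix w u v = 0 := fun u v huv hnadj ↦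
    (stateMatrix_apply_of_ne huv).trans (hw u v huv hnadj)
  rw [pow_dist_add_one_apply_of_isAcyclic hG hsupp hadj hq, stateMatrix_apply_of_ne hadj.ne,
    stateMatrix_apply_self (hw q'), neg_mul, ← sub_eq_add_neg]

theorem markov_entry_recursion_children_vanish
    {V : Type*} [Fintype V] [DecidableEq V] (G : SimpleGraph V)
    [DecidableRel G.Adj] (hT : G.IsTree) (r : V)
    (w : V → V → ℝ) (hw : IsWeightFn G w)
    (q' q : V) (hq'r : q' ≠ r) (hadj : G.Adj q' q)
    (hq : G.dist q r + 1 = G.dist q' r) :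
    (stateMatrix w ^ (G.dist q' r + 1)) q' r =
      w q' q * (stateMatrix w ^ G.dist q' r) q r -
        (∑ ℓ ∈ G.neighborFinset q', w q' ℓ) * (stateMatrix w ^ G.dist q' r) q' r :=
  markov_entry_recursion_children_vanish_general hT.isAcyclic hw.2.2.1 hadj hq
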